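/- Let Λ ⊂ ℝ^n be a full-rank lattice, σ_s, σ_w > 0 with σ_s < σ_w, α = σ_s²/(σ_s²+σ_w²) and σ_eff² = σ_s²σ_w²/(σ_s²+σ_w²) (so that √α·σ_s < σ_eff). Then ∫_{V(Λ)} f_{σ_eff}(w) · f_{√α·σ_s}((Λ∖{0}) + w) dw ≤ ∫_{V(Λ)} f_{σ_eff}((Λ∖{0}) + w) · f_{√α·σ_s}(w) dw, where both integrals are over the Voronoi cell of Λ. -/

import Mathlib

open MeasureTheory Real Filter Pointwise
open scoped ENNReal RealInnerProductSpace

noncomputable section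

/-- The (continuous) Gaussian density with parameter `σ` on `ℝⁿ`:
`f_σ(x) = (2πσ²)^{-n/2} exp(-‖x‖²/(2σ²))`. -/
def gaussF (n : ℕ) (σ : ℝ) (x : EuclideanSpace ℝ (Fin n)) : ℝ :=
  (2 * π * σ ^ 2) ^ (-(n : ℝ) / 2) * Real.exp (-‖x‖ ^ 2 / (2 * σ ^ 2))

/-- The Gaussian mass `f_σ(S) = Σ_{y ∈ S} f_σ(y)` of a (countable) set `S ⊆ ℝⁿ`. -/
def gaussMass (n : ℕ) (σ : ℝ) (S : Set (EuclideanSpace ℝ (Fin n))) : ℝ :=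
  ∑' y : S, gaussF n σ y

/-- The Gaussian measure `N(0, σ² Iₙ)` on `ℝⁿ`, given by its density w.r.t. Lebesgue measure. -/
def gaussMeasure (n : ℕ) (σ : ℝ) : Measure (EuclideanSpace ℝ (Fin n)) :=
  volume.withDensity fun x => ENNReal.ofReal (gaussF n σ x)

/-- The coset `S + t` of a set `S ⊆ ℝⁿ`, i.e. `{x | x - t ∈ S}`. -/
def coset (n : ℕ) (S : Set (EuclideanSpace ℝ (Fin n))) (t : EuclideanSpace ℝ (Fin n)) :
    Set (EuclideanSpace ℝ (Fin n)) := {x | x - t ∈ S}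

/-- The Voronoi cell of `S`: `{x | ⟪x,y⟫ ≤ ‖y‖²/2 for all y ∈ S}`. -/
def voronoi (n : ℕ) (S : Set (EuclideanSpace ℝ (Fin n))) : Set (EuclideanSpace ℝ (Fin n)) :=
  {x | ∀ y ∈ S, ⟪x, y⟫ ≤ ‖y‖ ^ 2 / 2}

/-- The inverse error function `err⁻¹_ε(Λ)`: the least `s > 0` such that a standard Gaussian
leaves `s · V(Λ)` with probability at most `ε`. -/
def errInv (n : ℕ) (ε : ℝ) (S : Set (EuclideanSpace ℝ (Fin n))) : ℝ :=
  sInf {s : ℝ | 0 < s ∧ gaussMeasure n 1 ((s • voronoi n S)ᶜ) ≤ ENNReal.ofReal ε}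

/-- The Shannon entropy (in nats) of the discrete Gaussian `D_{S,σ}` supported on `S`,
which assigns mass `f_σ(y)/f_σ(S)` to each `y ∈ S`. -/
def dgEntropy (n : ℕ) (σ : ℝ) (S : Set (EuclideanSpace ℝ (Fin n))) : ℝ :=
  -∑' y : S, (gaussF n σ y / gaussMass n σ S) * Real.log (gaussF n σ y / gaussMass n σ S)

/-- The flatness factor `ε_Λ(σ) = sup_{x ∈ V(Λ)} |V(Λ)·f_σ(Λ+x) − 1|`. -/
def flatness (n : ℕ) (L : Submodule ℤ (EuclideanSpace ℝ (Fin n))) (σ : ℝ) : ℝ :=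
  ⨆ x : voronoi n (L : Set (EuclideanSpace ℝ (Fin n))),
    |ZLattice.covolume L volume *
        gaussMass n σ (coset n (L : Set (EuclideanSpace ℝ (Fin n))) x) - 1|

/-!
For `w` in the Voronoi cell and a lattice point `x` we have `‖w‖ ≤ ‖x + w‖`. Since the
likelihood ratio `f_a / f_b` of two Gaussians with `b ≤ a` is nondecreasing in the norm,
`f_a(w) f_b(x + w) ≤ f_a(x + w) f_b(w)`; summing over `x` compares the integrands pointwise.

The right-hand integrand must be integrable for this to pass to the integrals. On the Voronoi cell,
`‖x‖ ≤ ‖x + w‖ + ‖w‖ ≤ 2‖x + w‖`, so `f_a(x + w) ≤ f_a(x / 2)`: the lattice sum is dominated,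
uniformly in `w`, by a convergent series.
-/

section Gaussian

variable {n : ℕ}

lemma gaussF_nonneg (σ : ℝ) (x : EuclideanSpace ℝ (Fin n)) : 0 ≤ gaussF n σ x := by
  unfold gaussF
  positivity

@[fun_prop]
lemma continuous_gaussF (σ : ℝ) : Continuous (gaussF n σ) := by
  unfold gaussF
  fun_prop

lemma gaussF_le_gaussF_of_norm_le (σ : ℝ) {x y : EuclideanSpace ℝ (Fin n)} (hxy : ‖x‖ ≤ ‖y‖) :
    gaussF n σ y ≤ gaussF n σ x := by
  unfold gaussF
  gcongr

lemma gaussF_mul_gaussF_le_of_norm_le {a b : ℝ} (hb : 0 < b) (hba : b ≤ a)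
    {w u : EuclideanSpace ℝ (Fin n)} (hwu : ‖w‖ ≤ ‖u‖) :
    gaussF n a w * gaussF n b u ≤ gaussF n a u * gaussF n b w := by
  have exponent_le : -‖w‖ ^ 2 / (2 * a ^ 2) + -‖u‖ ^ 2 / (2 * b ^ 2) ≤
      -‖u‖ ^ 2 / (2 * a ^ 2) + -‖w‖ ^ 2 / (2 * b ^ 2) := by
    have hsq : 0 ≤ ‖u‖ ^ 2 - ‖w‖ ^ 2 := sub_nonneg.2 (by gcongr)
    have hdiv : (‖u‖ ^ 2 - ‖w‖ ^ 2) / (2 * a ^ 2) ≤ (‖u‖ ^ 2 - ‖w‖ ^ 2) / (2 * b ^ 2) := by gcongr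
    simp only [sub_div, neg_div] at hdiv ⊢
    linarith
  unfold gaussF
  rw [mul_mul_mul_comm, mul_mul_mul_comm _ (exp (-‖u‖ ^ 2 / (2 * a ^ 2))), ← exp_add, ← exp_add]
  gcongr

lemma integrable_gaussF {σ : ℝ} (hσ : σ ≠ 0) : Integrable (gaussF n σ) := by
  have hc : 0 < 1 / (2 * σ ^ 2) := by positivity
  have hexp : Integrable fun x : EuclideanSpace ℝ (Fin n) ↦ exp (-(1 / (2 * σ ^ 2)) * ‖x‖ ^ 2) :=
    .of_integral_ne_zero <| by
      rw [GaussianFourier.integral_rexp_neg_mul_sq_norm hc]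
      positivity
  refine (hexp.const_mul ((2 * π * σ ^ 2) ^ (-(n : ℝ) / 2))).congr (.of_forall fun x ↦ ?_)
  simp only [gaussF]
  ring_nf

lemma gaussMass_coset (σ : ℝ) (S : Set (EuclideanSpace ℝ (Fin n)))
    (t : EuclideanSpace ℝ (Fin n)) :
    gaussMass n σ (coset n S t) = ∑' x : S, gaussF n σ (x + t) := by
  let e : coset n S t ≃ S := (Equiv.subRight t).subtypeEquiv fun _ ↦ Iff.rfl
  have he (y : coset n S t) : (e y : EuclideanSpace ℝ (Fin n)) + t = y := sub_add_cancel _ _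
  simpa only [gaussMass, he] using e.tsum_eq fun x : S ↦ gaussF n σ (x + t)

lemma gaussMass_nonneg (σ : ℝ) (S : Set (EuclideanSpace ℝ (Fin n))) : 0 ≤ gaussMass n σ S :=
  tsum_nonneg fun _ ↦ gaussF_nonneg σ _

end Gaussian

section LatticeSum

lemma summable_exp_neg_mul_norm_sq {E : Type*} [NormedAddCommGroup E] [NormedSpace ℝ E]
    [FiniteDimensional ℝ E] (L : Submodule ℤ E) [DiscreteTopology L] {c : ℝ} (hc : 0 < c) :
    Summable fun x : L ↦ exp (-c * ‖x‖ ^ 2) := by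
  have norm_tendsto : Tendsto (fun x : L ↦ ‖(x : E)‖) cofinite atTop :=
    (tendsto_norm_cocompact_atTop (E := E)).comp
      (L.toAddSubgroup.tendsto_coe_cofinite_of_discrete
        (isDiscrete_iff_discreteTopology.2 ‹_›))
  have exp_isLittleO :=
    rexp_neg_quadratic_isLittleO_rpow_atTop (neg_lt_zero.2 hc) 0 (-(Module.finrank ℤ L + 1))
  simp only [zero_mul, add_zero] at exp_isLittleO
  exact summable_of_isBigO (ZLattice.summable_norm_rpow L _ (by linarith))
    (exp_isLittleO.comp_tendsto norm_tendsto).isBigO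

variable {n : ℕ} {L : Submodule ℤ (EuclideanSpace ℝ (Fin n))} [DiscreteTopology L]
  {S : Set (EuclideanSpace ℝ (Fin n))} {σ c : ℝ}

lemma summable_gaussF_smul (hSL : S ⊆ L) (hσ : σ ≠ 0) (hc : c ≠ 0) :
    Summable fun x : S ↦ gaussF n σ (c • (x : EuclideanSpace ℝ (Fin n))) := by
  have hpos : 0 < c ^ 2 / (2 * σ ^ 2) := by positivity
  have hexp := (summable_exp_neg_mul_norm_sq L hpos).comp_injective (Set.inclusion_injective hSL)
  refine (hexp.mul_left ((2 * π * σ ^ 2) ^ (-(n : ℝ) / 2))).congr fun x ↦ ?_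
  simp only [gaussF, norm_smul, mul_pow, norm_eq_abs, sq_abs, Function.comp_apply,
    Submodule.coe_norm]
  ring_nf

end LatticeSum

section Voronoi

variable {n : ℕ}

lemma isClosed_voronoi (S : Set (EuclideanSpace ℝ (Fin n))) : IsClosed (voronoi n S) := by
  simp only [voronoi, Set.ofPred_forall]
  exact isClosed_biInter fun y _ ↦ isClosed_le (by fun_prop) (by fun_prop)

lemma mem_voronoi_iff_norm_le {S : Set (EuclideanSpace ℝ (Fin n))}
    {w : EuclideanSpace ℝ (Fin n)} : w ∈ voronoi n S ↔ ∀ y ∈ S, ‖w‖ ≤ ‖w - y‖ := by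
  refine forall₂_congr fun y _ ↦ ?_
  rw [← sq_le_sq₀ (norm_nonneg w) (norm_nonneg _), norm_sub_sq_real]
  constructor <;> intro h <;> linarith

variable {L : Submodule ℤ (EuclideanSpace ℝ (Fin n))} {x w : EuclideanSpace ℝ (Fin n)}

lemma norm_le_norm_add_of_mem_voronoi (hw : w ∈ voronoi n (L : Set _)) (hx : x ∈ L) :
    ‖w‖ ≤ ‖x + w‖ := by
  simpa [add_comm] using mem_voronoi_iff_norm_le.1 hw (-x) (L.neg_mem hx)

lemma norm_inv_two_smul_le_norm_add_of_mem_voronoi (hw : w ∈ voronoi n (L : Set _))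
    (hx : x ∈ L) : ‖(2⁻¹ : ℝ) • x‖ ≤ ‖x + w‖ := by
  have triangle : ‖x‖ ≤ ‖x + w‖ + ‖w‖ := by simpa using norm_sub_le (x + w) w
  rw [norm_smul, norm_inv, norm_ofNat]
  linarith [norm_le_norm_add_of_mem_voronoi hw hx]

lemma gaussF_add_le_of_mem_voronoi (σ : ℝ) (hw : w ∈ voronoi n (L : Set _)) (hx : x ∈ L) :
    gaussF n σ (x + w) ≤ gaussF n σ ((2⁻¹ : ℝ) • x) :=
  gaussF_le_gaussF_of_norm_le σ (norm_inv_two_smul_le_norm_add_of_mem_voronoi hw hx)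

end Voronoi

section CosetMass

variable {n : ℕ} {L : Submodule ℤ (EuclideanSpace ℝ (Fin n))} [DiscreteTopology L]
  {S : Set (EuclideanSpace ℝ (Fin n))} {w : EuclideanSpace ℝ (Fin n)} {σ a b : ℝ}

lemma summable_gaussF_add_of_mem_voronoi (hSL : S ⊆ L) (hσ : σ ≠ 0)
    (hw : w ∈ voronoi n (L : Set _)) : Summable fun x : S ↦ gaussF n σ (x + w) :=
  .of_nonneg_of_le (fun _ ↦ gaussF_nonneg σ _)
    (fun x ↦ gaussF_add_le_of_mem_voronoi σ hw (hSL x.2))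
    (summable_gaussF_smul hSL hσ (by norm_num))

lemma gaussMass_coset_le_of_mem_voronoi (hSL : S ⊆ L) (hσ : σ ≠ 0)
    (hw : w ∈ voronoi n (L : Set _)) :
    gaussMass n σ (coset n S w) ≤
      ∑' x : S, gaussF n σ ((2⁻¹ : ℝ) • (x : EuclideanSpace ℝ (Fin n))) := by
  rw [gaussMass_coset]
  exact (summable_gaussF_add_of_mem_voronoi hSL hσ hw).tsum_le_tsum
    (fun x ↦ gaussF_add_le_of_mem_voronoi σ hw (hSL x.2))
    (summable_gaussF_smul hSL hσ (by norm_num))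

lemma continuousOn_gaussMass_coset (hSL : S ⊆ L) (hσ : σ ≠ 0) :
    ContinuousOn (fun w ↦ gaussMass n σ (coset n S w)) (voronoi n (L : Set _)) := by
  simp only [gaussMass_coset]
  refine continuousOn_tsum (fun x ↦ by fun_prop)
    (summable_gaussF_smul hSL hσ (inv_ne_zero two_ne_zero)) fun x w hw ↦ ?_
  rw [norm_of_nonneg (gaussF_nonneg σ _)]
  exact gaussF_add_le_of_mem_voronoi σ hw (hSL x.2)

lemma integrableOn_gaussMass_coset_mul_gaussF (hSL : S ⊆ L) (ha : a ≠ 0) (hb : b ≠ 0) :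
    IntegrableOn (fun w ↦ gaussMass n a (coset n S w) * gaussF n b w)
      (voronoi n (L : Set _)) := by
  have hV := (isClosed_voronoi (L : Set (EuclideanSpace ℝ (Fin n)))).measurableSet
  exact (integrable_gaussF hb).integrableOn.bdd_mul
    ((continuousOn_gaussMass_coset hSL ha).aestronglyMeasurable hV)
    (ae_restrict_of_forall_mem hV fun w hw ↦
      (norm_of_nonneg (gaussMass_nonneg a _)).trans_le
        (gaussMass_coset_le_of_mem_voronoi hSL ha hw))

lemma gaussF_mul_gaussMass_coset_le_of_mem_voronoi (hSL : S ⊆ L) (hb : 0 < b) (hba : b ≤ a)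
    (hw : w ∈ voronoi n (L : Set _)) :
    gaussF n a w * gaussMass n b (coset n S w) ≤ gaussMass n a (coset n S w) * gaussF n b w := by
  have summable_add {σ : ℝ} (hσ : 0 < σ) : Summable fun x : S ↦ gaussF n σ (x + w) :=
    summable_gaussF_add_of_mem_voronoi hSL hσ.ne' hw
  simp only [gaussMass_coset, ← tsum_mul_left, ← tsum_mul_right]
  exact ((summable_add hb).mul_left _).tsum_le_tsum
    (fun x ↦ gaussF_mul_gaussF_le_of_norm_le hb hba
      (norm_le_norm_add_of_mem_voronoi hw (hSL x.2)))
    ((summable_add (hb.trans_le hba)).mul_right _)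

end CosetMass

theorem voronoi_integral_swap_inequality_general {n : ℕ}
    {L : Submodule ℤ (EuclideanSpace ℝ (Fin n))} [DiscreteTopology L]
    {S : Set (EuclideanSpace ℝ (Fin n))} (hSL : S ⊆ L) {a b : ℝ} (hb : 0 < b) (hba : b ≤ a) :
    ∫ w in voronoi n (L : Set (EuclideanSpace ℝ (Fin n))),
        gaussF n a w * gaussMass n b (coset n S w)
      ≤ ∫ w in voronoi n (L : Set (EuclideanSpace ℝ (Fin n))),
          gaussMass n a (coset n S w) * gaussF n b w := by
  have hV := (isClosed_voronoi (L : Set (EuclideanSpace ℝ (Fin n)))).measurableSet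
  refine integral_mono_of_nonneg
    (.of_forall fun w ↦ mul_nonneg (gaussF_nonneg a w) (gaussMass_nonneg b _))
    (integrableOn_gaussMass_coset_mul_gaussF hSL (hb.trans_le hba).ne' hb.ne')
    (ae_restrict_of_forall_mem hV fun w hw ↦ ?_)
  exact gaussF_mul_gaussMass_coset_le_of_mem_voronoi hSL hb hba hw

lemma sqrt_sq_div_mul_le_sqrt {s t : ℝ} (hs : 0 ≤ s) (hst : s ≤ t) :
    √(s ^ 2 / (s ^ 2 + t ^ 2)) * s ≤ √(s ^ 2 * t ^ 2 / (s ^ 2 + t ^ 2)) := by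
  refine le_sqrt_of_sq_le ?_
  rw [mul_pow, sq_sqrt (by positivity), div_mul_eq_mul_div]
  gcongr

/-- for `σ_s < σ_w` (so `√α·σ_s < σ_eff`),
`∫_{V(Λ)} f_{σ_eff}(w)·f_{√α·σ_s}((Λ∖{0})+w) dw ≤ ∫_{V(Λ)} f_{σ_eff}((Λ∖{0})+w)·f_{√α·σ_s}(w) dw`. -/
theorem voronoi_integral_swap_inequality (n : ℕ) (L : Submodule ℤ (EuclideanSpace ℝ (Fin n)))
    [DiscreteTopology L] [IsZLattice ℝ L]
    (σs σw : ℝ) (hσs : 0 < σs) (hσw : 0 < σw) (hsw : σs < σw)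
    (α σeff : ℝ)
    (hα : α = σs ^ 2 / (σs ^ 2 + σw ^ 2))
    (hσeff : σeff = Real.sqrt (σs ^ 2 * σw ^ 2 / (σs ^ 2 + σw ^ 2))) :
    ∫ w in voronoi n (L : Set (EuclideanSpace ℝ (Fin n))),
        gaussF n σeff w * gaussMass n (Real.sqrt α * σs) (coset n ((L : Set (EuclideanSpace ℝ (Fin n))) \ {0}) w)
      ≤ ∫ w in voronoi n (L : Set (EuclideanSpace ℝ (Fin n))),
          gaussMass n σeff (coset n ((L : Set (EuclideanSpace ℝ (Fin n))) \ {0}) w) *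
            gaussF n (Real.sqrt α * σs) w := by
  subst hα hσeff
  exact voronoi_integral_swap_inequality_general Set.sdiff_subset (by positivity)
    (sqrt_sq_div_mul_le_sqrt hσs.le hsw.le)
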